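/- Let ρ ∈ (0, 1), σ₀ ∈ (0, 1), t₀ > 1, and let λ₁ > 1 satisfy λ₁^{σ₀} ≥ 5 Γ(1−ρ). Then for every d₁ > 0 there exists a unique σ ∈ (σ₀, 1) such that E_ρ(−λ₁^σ t₀^ρ) = d₁ if and only if E_ρ(−λ₁ t₀^ρ) < d₁ < E_ρ(−λ₁^{σ₀} t₀^ρ). -/

import Mathlib

open Set Real

/-- The Mittag-Leffler function `E_ρ(z) = ∑_{k=0}^∞ z^k / Γ(ρk + 1)`. -/
noncomputable def mittagLeffler (ρ z : ℝ) : ℝ := ∑' k : ℕ, z ^ k / Real.Gamma (ρ * k + 1)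

open MeasureTheory in
lemma ml_gamma_lower (s M : ℝ) (hs : 0 ≤ s) (hM : 0 < M) :
    M ^ s * Real.exp (-M) ≤ Real.Gamma (s + 1) := by
  rw [Real.Gamma_eq_integral (by linarith), ← integral_exp_neg_Ioi, ← integral_const_mul]
  have hint := Real.GammaIntegral_convergent (s := s + 1) (by linarith)
  have hsub : Ioi M ⊆ Ioi (0:ℝ) := Ioi_subset_Ioi hM.le
  calc ∫ x in Ioi M, M ^ s * Real.exp (-x)
      ≤ ∫ x in Ioi M, Real.exp (-x) * x ^ (s + 1 - 1) := by
        apply setIntegral_mono_on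
        · exact (integrableOn_exp_neg_Ioi M).const_mul _
        · exact hint.mono_set hsub
        · exact measurableSet_Ioi
        · intro x hx
          have hx' : M < x := hx
          rw [mul_comm, add_sub_cancel_right]
          gcongr
    _ ≤ _ := by
        apply setIntegral_mono_set hint
        · filter_upwards [self_mem_ae_restrict measurableSet_Ioi] with x hx
          have : (0:ℝ) < x := hx
          simp only [Pi.zero_apply]
          positivity
        · exact hsub.eventuallyLE

/-- A summable bound, uniform on `|z| ≤ R`. -/
lemma ml_bound (ρ R : ℝ) (hρ : 0 < ρ) (hR : 0 ≤ R) :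
    ∃ b : ℕ → ℝ, Summable b ∧ ∀ (k : ℕ) (z : ℝ), |z| ≤ R →
      |z ^ k / Real.Gamma (ρ * k + 1)| ≤ b k := by
  set M : ℝ := (2 * R + 1) ^ (1 / ρ) with hMdef
  have hM : 0 < M := by positivity
  have hMρ : M ^ ρ = 2 * R + 1 := by
    rw [hMdef, ← Real.rpow_mul (by positivity), one_div_mul_cancel hρ.ne', Real.rpow_one]
  refine ⟨fun k => Real.exp M * (R / (2 * R + 1)) ^ k, ?_, ?_⟩
  · apply Summable.mul_left
    apply summable_geometric_of_lt_one (by positivity)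
    rw [div_lt_one (by positivity)]; linarith
  · intro k z hz
    have hG := ml_gamma_lower (ρ * k) M (by positivity) hM
    rw [Real.rpow_mul hM.le, hMρ, Real.rpow_natCast] at hG
    have hGp : 0 < Real.Gamma (ρ * k + 1) := Real.Gamma_pos_of_pos (by positivity)
    rw [abs_div, abs_pow, abs_of_pos hGp]
    calc |z| ^ k / Real.Gamma (ρ * k + 1) ≤ R ^ k / ((2 * R + 1) ^ k * Real.exp (-M)) := by
          gcongr
      _ = _ := by
          simp only [Real.exp_neg, div_pow]; field_simp

lemma ml_summable (ρ z : ℝ) (hρ : 0 < ρ) :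
    Summable fun k : ℕ => z ^ k / Real.Gamma (ρ * k + 1) := by
  obtain ⟨b, hb, h⟩ := ml_bound ρ |z| hρ (abs_nonneg z)
  exact Summable.of_norm_bounded hb (fun k => h k z le_rfl)

lemma ml_continuous (ρ : ℝ) (hρ : 0 < ρ) : Continuous (mittagLeffler ρ) := by
  rw [continuous_iff_continuousAt]
  intro x
  obtain ⟨b, hb, h⟩ := ml_bound ρ (|x| + 1) hρ (by positivity)
  have : ContinuousOn (mittagLeffler ρ) (Icc (-(|x| + 1)) (|x| + 1)) := by
    apply continuousOn_tsum (u := b) _ hb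
    · intro k z hz
      exact h k z (abs_le.2 hz)
    · intro k
      fun_prop
  apply this.continuousAt
  apply Icc_mem_nhds
  · linarith [neg_abs_le x]
  · linarith [le_abs_self x]

open MeasureTheory in
lemma ml_beta (ρ a t : ℝ) (hρ : 0 < ρ) (ha : 0 < a) (ht : 0 < t) :
    ∫ s in (0:ℝ)..t, (t - s) ^ (ρ - 1) * s ^ (a - 1) =
      t ^ (a + ρ - 1) * (Real.Gamma a * Real.Gamma ρ / Real.Gamma (a + ρ)) := by
  have h := Complex.betaIntegral_scaled a ρ ht
  have h2 := ProbabilityTheory.beta_eq_betaIntegralReal a ρ ha hρ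
  have e : ∫ x in (0:ℝ)..t, (x : ℂ) ^ ((a:ℂ) - 1) * ((t : ℂ) - x) ^ ((ρ:ℂ) - 1)
      = ((∫ s in (0:ℝ)..t, (t - s) ^ (ρ - 1) * s ^ (a - 1) : ℝ) : ℂ) := by
    rw [← intervalIntegral.integral_ofReal]
    apply intervalIntegral.integral_congr
    intro x hx
    rw [uIcc_of_le ht.le] at hx
    simp only
    push_cast
    rw [Complex.ofReal_cpow (by linarith [hx.2]), Complex.ofReal_cpow hx.1]
    push_cast
    ring
  rw [e] at h
  have h3 := congrArg Complex.re h
  rw [Complex.ofReal_re] at h3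
  rw [h3, ← ProbabilityTheory.beta, h2]
  have : (t : ℂ) ^ ((a:ℂ) + ρ - 1) = ((t ^ (a + ρ - 1) : ℝ) : ℂ) := by
    rw [Complex.ofReal_cpow ht.le]; push_cast; rfl
  rw [this, Complex.re_ofReal_mul]

lemma ml_kernel_integrable (ρ t a b : ℝ) (hρ : 0 < ρ) :
    IntervalIntegrable (fun s => (t - s) ^ (ρ - 1)) MeasureTheory.volume a b := by
  have := (intervalIntegral.intervalIntegrable_rpow' (a := t - a) (b := t - b)
    (r := ρ - 1) (by linarith)).comp_sub_left t
  simpa using this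

lemma ml_kernel_mul_integrable (ρ t a b : ℝ) (hρ : 0 < ρ) (w : ℝ → ℝ) (hw : Continuous w) :
    IntervalIntegrable (fun s => (t - s) ^ (ρ - 1) * w s) MeasureTheory.volume a b :=
  (ml_kernel_integrable ρ t a b hρ).mul_continuousOn hw.continuousOn

/-- `u t = E_ρ(-t^ρ)`. -/
noncomputable def mlU (ρ t : ℝ) : ℝ := mittagLeffler ρ (-(t ^ ρ))

lemma mlU_continuous (ρ : ℝ) (hρ : 0 < ρ) : Continuous (mlU ρ) :=
  (ml_continuous ρ hρ).comp (Real.continuous_rpow_const hρ.le).neg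

lemma mlU_zero (ρ : ℝ) (hρ : 0 < ρ) : mlU ρ 0 = 1 := by
  unfold mlU mittagLeffler
  rw [Real.zero_rpow hρ.ne', tsum_eq_single 0]
  · simp
  · intro k hk
    simp [hk]

lemma mlU_volterra (ρ t : ℝ) (hρ : 0 < ρ) (ht : 0 ≤ t) :
    mlU ρ t = 1 - (Real.Gamma ρ)⁻¹ * ∫ s in (0:ℝ)..t, (t - s) ^ (ρ - 1) * mlU ρ s := by
  rcases ht.eq_or_lt with rfl | ht
  · simp [mlU_zero ρ hρ]
  obtain ⟨b, hb, h⟩ := ml_bound ρ (t ^ ρ) hρ (by positivity)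
  have hG := Real.Gamma_pos_of_pos hρ
  have key : HasSum (fun k : ℕ => ∫ s in (0:ℝ)..t,
      (t - s) ^ (ρ - 1) * ((-(s ^ ρ)) ^ k / Real.Gamma (ρ * k + 1)))
      (∫ s in (0:ℝ)..t, (t - s) ^ (ρ - 1) * mlU ρ s) := by
    apply intervalIntegral.hasSum_integral_of_dominated_convergence
      (fun k s => (t - s) ^ (ρ - 1) * b k)
    · intro k
      have := Real.continuous_rpow_const hρ.le
      have hc : Continuous fun s : ℝ => (-(s ^ ρ)) ^ k / Real.Gamma (ρ * k + 1) := by fun_prop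
      have hi := ml_kernel_mul_integrable ρ t 0 t hρ _ hc
      rw [uIoc_of_le ht.le]
      exact hi.1.aestronglyMeasurable
    · intro k
      refine Filter.Eventually.of_forall fun s hs => ?_
      rw [uIoc_of_le ht.le] at hs
      have h1 : 0 ≤ (t - s) ^ (ρ - 1) := Real.rpow_nonneg (by linarith [hs.2]) _
      rw [norm_mul, Real.norm_of_nonneg h1]
      apply mul_le_mul_of_nonneg_left _ h1
      apply h
      rw [abs_neg, abs_of_nonneg (Real.rpow_nonneg hs.1.le _)]
      exact Real.rpow_le_rpow hs.1.le hs.2 hρ.le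
    · refine Filter.Eventually.of_forall fun s hs => hb.mul_left _
    · simp_rw [tsum_mul_left]
      exact (ml_kernel_integrable ρ t 0 t hρ).mul_const _
    · refine Filter.Eventually.of_forall fun s hs => ?_
      exact (ml_summable ρ (-(s ^ ρ)) hρ).hasSum.mul_left _
  have hterm : ∀ k : ℕ, ∫ s in (0:ℝ)..t,
      (t - s) ^ (ρ - 1) * ((-(s ^ ρ)) ^ k / Real.Gamma (ρ * k + 1)) =
      - Real.Gamma ρ * ((-(t ^ ρ)) ^ (k + 1) / Real.Gamma (ρ * (k + 1 : ℕ) + 1)) := by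
    intro k
    have hbeta := ml_beta ρ (ρ * k + 1) t hρ (by positivity) ht
    have hGk : 0 < Real.Gamma (ρ * k + 1) := Real.Gamma_pos_of_pos (by positivity)
    have e1 : ∫ s in (0:ℝ)..t,
        (t - s) ^ (ρ - 1) * ((-(s ^ ρ)) ^ k / Real.Gamma (ρ * k + 1)) =
        ((-1) ^ k / Real.Gamma (ρ * k + 1)) *
        ∫ s in (0:ℝ)..t, (t - s) ^ (ρ - 1) * s ^ (ρ * k + 1 - 1) := by
      rw [← intervalIntegral.integral_const_mul]
      apply intervalIntegral.integral_congr
      intro s hs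
      rw [uIcc_of_le ht.le] at hs
      simp only
      rw [add_sub_cancel_right, Real.rpow_mul hs.1, Real.rpow_natCast, neg_pow]
      ring
    rw [e1, hbeta]
    have e2 : ρ * k + 1 + ρ - 1 = ρ * ((k + 1 : ℕ) : ℝ) := by push_cast; ring
    have e3 : ρ * k + 1 + ρ = ρ * ((k + 1 : ℕ) : ℝ) + 1 := by push_cast; ring
    rw [e2, e3, Real.rpow_mul ht.le, Real.rpow_natCast, neg_pow (t ^ ρ), pow_succ (-1 : ℝ)]
    field_simp
  simp_rw [hterm] at key
  rw [← key.tsum_eq, tsum_mul_left]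
  unfold mlU mittagLeffler
  rw [(ml_summable ρ (-(t ^ ρ)) hρ).tsum_eq_zero_add]
  have : (Real.Gamma ρ)⁻¹ * Real.Gamma ρ = 1 := inv_mul_cancel₀ hG.ne'
  simp only [pow_zero, Nat.cast_zero, mul_zero, zero_add, Real.Gamma_one, div_one]
  rw [← mul_assoc, mul_neg, this]
  ring

/-- Positivity of solutions of the Volterra equation. -/
lemma ml_volterra_pos (ρ c : ℝ) (hρ : 0 < ρ) (hρ' : ρ < 1) (hc : 0 < c) (w g : ℝ → ℝ)
    (hw : Continuous w) (h0 : 0 < w 0)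
    (heq : ∀ t, 0 ≤ t → w t = g t - c * ∫ s in (0:ℝ)..t, (t - s) ^ (ρ - 1) * w s)
    (hg : ∀ t t', 0 < t → t ≤ t' → (t' / t) ^ (ρ - 1) * g t ≤ g t') :
    ∀ t, 0 ≤ t → 0 < w t := by
  by_contra! hcon
  obtain ⟨T, hT0, hT⟩ := hcon
  set S : Set ℝ := {t | 0 ≤ t ∧ w t ≤ 0} with hS
  have hSc : IsClosed S := by
    apply IsClosed.inter isClosed_Ici
    exact isClosed_le hw continuous_const
  have hSne : S.Nonempty := ⟨T, hT0, hT⟩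
  have hSb : BddBelow S := ⟨0, fun t ht => ht.1⟩
  obtain ⟨t1, ht1, hmin⟩ : ∃ t1 ∈ S, ∀ t ∈ S, t1 ≤ t :=
    ⟨sInf S, hSc.csInf_mem hSne hSb, fun t ht => csInf_le hSb ht⟩
  have hpos : ∀ t, 0 ≤ t → t < t1 → 0 < w t := by
    intro t h1 h2
    by_contra! h3
    linarith [hmin t ⟨h1, h3⟩]
  have ht1pos : 0 < t1 := by
    rcases ht1.1.eq_or_lt with h | h
    · have := ht1.2
      rw [← h] at this
      linarith
    · exact h
  -- choose `t2`
  obtain ⟨δ, hδ, hδ2⟩ : ∃ δ > 0, c * (δ ^ ρ / ρ) < 1 / 2 := by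
    have hcont : ContinuousAt (fun δ : ℝ => c * (δ ^ ρ / ρ)) 0 := by
      have := Real.continuous_rpow_const hρ.le
      have h2 : Continuous (fun δ : ℝ => c * (δ ^ ρ / ρ)) := by fun_prop
      exact h2.continuousAt
    have hev : ∀ᶠ δ in nhds (0:ℝ), c * (δ ^ ρ / ρ) < 1 / 2 := by
      apply hcont.eventually_lt continuousAt_const
      rw [Real.zero_rpow hρ.ne']
      norm_num
    obtain ⟨ε, hε, hε2⟩ := Metric.eventually_nhds_iff.1 hev
    refine ⟨ε / 2, by positivity, hε2 ?_⟩
    rw [Real.dist_eq, sub_zero, abs_of_pos (by positivity)]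
    linarith
  set t2 : ℝ := max (t1 / 2) (t1 - δ) with ht2
  have ht2a : t1 / 2 ≤ t2 := le_max_left _ _
  have ht2b : t1 - δ ≤ t2 := le_max_right _ _
  have ht2c : t2 < t1 := max_lt (by linarith) (by linarith)
  obtain ⟨t, htm, htmax⟩ := isCompact_Icc.exists_isMaxOn
    (nonempty_Icc.2 ht2c.le) (hw.continuousOn (s := Icc t2 t1))
  have hmax : ∀ s ∈ Icc t2 t1, w s ≤ w t := fun s hs => htmax hs
  have hwt : 0 < w t :=
    lt_of_lt_of_le (hpos t2 (by linarith) ht2c) (hmax t2 ⟨le_rfl, ht2c.le⟩)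
  have htlt : t < t1 := by
    rcases htm.2.eq_or_lt with h | h
    · rw [h] at hwt
      linarith [ht1.2]
    · exact h
  have htpos : 0 < t := by linarith [htm.1]
  set q : ℝ := (t1 / t) ^ (ρ - 1) with hq
  have hqhalf : 1 / 2 ≤ q := by
    have h1 : t1 / t ≤ 2 := by
      rw [div_le_iff₀ htpos]; linarith [htm.1]
    have h1' : 1 ≤ t1 / t := by rw [le_div_iff₀ htpos]; linarith
    calc (1:ℝ) / 2 = 2 ^ (-1 : ℝ) := by rw [Real.rpow_neg_one]; norm_num
      _ ≤ 2 ^ (ρ - 1) := Real.rpow_le_rpow_of_exponent_le (by norm_num) (by linarith)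
      _ ≤ q := Real.rpow_le_rpow_of_nonpos (by linarith) h1 (by linarith)
  have hgt := hg t t1 htpos htlt.le
  have e1 := heq t1 ht1pos.le
  have e2 := heq t htpos.le
  have hI := ml_kernel_mul_integrable ρ t1 0 t hρ w hw
  have hI2 := ml_kernel_mul_integrable ρ t1 t t1 hρ w hw
  rw [← intervalIntegral.integral_add_adjacent_intervals hI hI2] at e1
  have b1 : ∫ s in (0:ℝ)..t, (t1 - s) ^ (ρ - 1) * w s ≤
      q * ∫ s in (0:ℝ)..t, (t - s) ^ (ρ - 1) * w s := by
    rw [← intervalIntegral.integral_const_mul]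
    apply intervalIntegral.integral_mono_on_of_le_Ioo htpos.le hI
      ((ml_kernel_mul_integrable ρ t 0 t hρ w hw).const_mul q)
    intro s hs
    have hts : 0 < t - s := by linarith [hs.2]
    have hws := hpos s hs.1.le (by linarith [hs.2])
    rw [← mul_assoc]
    apply mul_le_mul_of_nonneg_right _ hws.le
    rw [hq, ← Real.mul_rpow (by positivity) hts.le]
    apply Real.rpow_le_rpow_of_nonpos (by positivity) _ (by linarith)
    rw [div_mul_eq_mul_div, div_le_iff₀ htpos]
    nlinarith [hs.1]
  have b2 : ∫ s in t..t1, (t1 - s) ^ (ρ - 1) * w s ≤ w t * ((t1 - t) ^ ρ / ρ) := by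
    have e3 : ∫ s in t..t1, (t1 - s) ^ (ρ - 1) * w t = w t * ((t1 - t) ^ ρ / ρ) := by
      rw [intervalIntegral.integral_mul_const,
        intervalIntegral.integral_comp_sub_left (fun x => x ^ (ρ - 1)) t1, sub_self,
        integral_rpow (Or.inl (by linarith)), sub_add_cancel, Real.zero_rpow hρ.ne']
      ring
    rw [← e3]
    apply intervalIntegral.integral_mono_on_of_le_Ioo htlt.le hI2
      ((ml_kernel_integrable ρ t1 t t1 hρ).mul_const _)
    intro s hs
    apply mul_le_mul_of_nonneg_left (hmax s ⟨by linarith [hs.1, htm.1], hs.2.le⟩)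
    exact Real.rpow_nonneg (by linarith [hs.2]) _
  have b3 : c * ((t1 - t) ^ ρ / ρ) < 1 / 2 := by
    refine lt_of_le_of_lt ?_ hδ2
    have : (t1 - t) ^ ρ ≤ δ ^ ρ :=
      Real.rpow_le_rpow (by linarith) (by linarith [htm.1]) hρ.le
    gcongr
  have h5 := ht1.2
  have c1 := mul_le_mul_of_nonneg_left b1 hc.le
  have c2 := mul_le_mul_of_nonneg_left b2 hc.le
  have c3 : c * ((t1 - t) ^ ρ / ρ) * w t < 1 / 2 * w t := mul_lt_mul_of_pos_right b3 hwt
  have c4 : 1 / 2 * w t ≤ q * w t := mul_le_mul_of_nonneg_right hqhalf hwt.le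
  have c5 : q * w t = q * g t - c * (q * ∫ s in (0:ℝ)..t, (t - s) ^ (ρ - 1) * w s) := by
    rw [e2]
    ring
  nlinarith

lemma mlU_pos (ρ : ℝ) (hρ : 0 < ρ) (hρ' : ρ < 1) : ∀ t, 0 ≤ t → 0 < mlU ρ t := by
  apply ml_volterra_pos ρ (Real.Gamma ρ)⁻¹ hρ hρ' (inv_pos.2 (Real.Gamma_pos_of_pos hρ))
    (mlU ρ) (fun _ => 1) (mlU_continuous ρ hρ)
  · rw [mlU_zero ρ hρ]; norm_num
  · intro t ht
    exact mlU_volterra ρ t hρ ht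
  · intro t t' ht htt'
    rw [mul_one]
    apply Real.rpow_le_one_of_one_le_of_nonpos _ (by linarith)
    rw [le_div_iff₀ ht]; linarith

lemma mlU_shift_lt (ρ : ℝ) (hρ : 0 < ρ) (hρ' : ρ < 1) (h : ℝ) (hh : 0 < h) :
    ∀ t, 0 ≤ t → 0 < mlU ρ t - mlU ρ (t + h) := by
  have hc : 0 < (Real.Gamma ρ)⁻¹ := inv_pos.2 (Real.Gamma_pos_of_pos hρ)
  have hu := mlU_continuous ρ hρ
  have hint := fun t a b => ml_kernel_mul_integrable ρ t a b hρ (mlU ρ) hu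
  apply ml_volterra_pos ρ (Real.Gamma ρ)⁻¹ hρ hρ' hc
    (fun t => mlU ρ t - mlU ρ (t + h))
    (fun t => (Real.Gamma ρ)⁻¹ * ∫ s in (0:ℝ)..h, (t + h - s) ^ (ρ - 1) * mlU ρ s)
    (by fun_prop)
  · simp only [zero_add]
    rw [mlU_zero ρ hρ, mlU_volterra ρ h hρ hh.le, sub_sub_cancel]
    apply mul_pos hc
    apply intervalIntegral.intervalIntegral_pos_of_pos_on (hint h 0 h) _ hh
    intro s hs
    exact mul_pos (Real.rpow_pos_of_pos (by linarith [hs.2]) _) (mlU_pos ρ hρ hρ' s hs.1.le)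
  · intro t ht
    have e1 := mlU_volterra ρ t hρ ht
    have e2 := mlU_volterra ρ (t + h) hρ (by linarith)
    rw [← intervalIntegral.integral_add_adjacent_intervals
      (hint (t + h) 0 h) (hint (t + h) h (t + h))] at e2
    have e3 : ∫ s in h..(t + h), (t + h - s) ^ (ρ - 1) * mlU ρ s =
        ∫ s in (0:ℝ)..t, (t - s) ^ (ρ - 1) * mlU ρ (s + h) := by
      have := intervalIntegral.integral_comp_add_right (a := 0) (b := t)
        (fun s => (t + h - s) ^ (ρ - 1) * mlU ρ s) h
      rw [zero_add] at this
      rw [← this]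
      congr 1
      ext s
      congr 2
      ring
    have e4 : ∫ s in (0:ℝ)..t, (t - s) ^ (ρ - 1) * (mlU ρ s - mlU ρ (s + h)) =
        (∫ s in (0:ℝ)..t, (t - s) ^ (ρ - 1) * mlU ρ s) -
        ∫ s in (0:ℝ)..t, (t - s) ^ (ρ - 1) * mlU ρ (s + h) := by
      rw [← intervalIntegral.integral_sub (hint t 0 t)
        (ml_kernel_mul_integrable ρ t 0 t hρ (fun s => mlU ρ (s + h)) (by fun_prop))]
      congr 1
      ext s
      ring
    rw [e4, e1, e2, e3]
    ring
  · intro t t' ht htt'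
    rw [mul_left_comm]
    apply mul_le_mul_of_nonneg_left _ hc.le
    rw [← intervalIntegral.integral_const_mul]
    apply intervalIntegral.integral_mono_on_of_le_Ioo hh.le
      ((hint _ _ _).const_mul _) (hint _ _ _)
    intro s hs
    have ht' : 0 < t' := by linarith
    have hs2 : 0 < h - s := by linarith [hs.2]
    rw [← mul_assoc]
    apply mul_le_mul_of_nonneg_right _ (mlU_pos ρ hρ hρ' s hs.1.le).le
    rw [← Real.mul_rpow (by positivity) (by linarith)]
    apply Real.rpow_le_rpow_of_nonpos (by linarith) _ (by linarith)
    rw [div_mul_eq_mul_div, le_div_iff₀ ht]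
    nlinarith

lemma ml_lt (ρ : ℝ) (hρ : 0 < ρ) (hρ' : ρ < 1) (x y : ℝ) (hx : 0 ≤ x) (hxy : x < y) :
    mittagLeffler ρ (-y) < mittagLeffler ρ (-x) := by
  have hxp : (x ^ (1 / ρ)) ^ ρ = x := by
    rw [← Real.rpow_mul hx, one_div_mul_cancel hρ.ne', Real.rpow_one]
  have hyp : (y ^ (1 / ρ)) ^ ρ = y := by
    rw [← Real.rpow_mul (by linarith), one_div_mul_cancel hρ.ne', Real.rpow_one]
  have hlt : x ^ (1 / ρ) < y ^ (1 / ρ) := Real.rpow_lt_rpow hx hxy (by positivity)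
  have := mlU_shift_lt ρ hρ hρ' (y ^ (1 / ρ) - x ^ (1 / ρ)) (by linarith) (x ^ (1 / ρ))
    (Real.rpow_nonneg hx _)
  rw [add_sub_cancel] at this
  unfold mlU at this
  rw [hxp, hyp] at this
  linarith

/-- For `ρ ∈ (0,1)`, `σ₀ ∈ (0,1)`, `t₀ > 1` and `λ₁ > 1` with `λ₁^{σ₀} ≥ 5Γ(1−ρ)`, for
every `d₁ > 0` there is a unique `σ ∈ (σ₀, 1)` with `E_ρ(−λ₁^σ t₀^ρ) = d₁` iff
`E_ρ(−λ₁ t₀^ρ) < d₁ < E_ρ(−λ₁^{σ₀} t₀^ρ)`. -/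
theorem stmt12 (ρ σ₀ t₀ lam₁ : ℝ) (hρ : 0 < ρ) (hρ' : ρ < 1) (hσ₀ : 0 < σ₀) (hσ₀' : σ₀ < 1)
    (ht₀ : 1 < t₀) (hlam₁ : 1 < lam₁) (h : 5 * Real.Gamma (1 - ρ) ≤ lam₁ ^ σ₀) :
    ∀ d₁ : ℝ, 0 < d₁ →
      ((∃! σ : ℝ, σ ∈ Set.Ioo σ₀ 1 ∧ mittagLeffler ρ (-(lam₁ ^ σ * t₀ ^ ρ)) = d₁) ↔
        (mittagLeffler ρ (-(lam₁ * t₀ ^ ρ)) < d₁ ∧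
          d₁ < mittagLeffler ρ (-(lam₁ ^ σ₀ * t₀ ^ ρ)))) := by
  intro d₁ _
  set f : ℝ → ℝ := fun σ => mittagLeffler ρ (-(lam₁ ^ σ * t₀ ^ ρ)) with hf
  have hl0 : 0 < lam₁ := by linarith
  have htp : 0 < t₀ ^ ρ := Real.rpow_pos_of_pos (by linarith) _
  have hanti : StrictAnti f := by
    intro a b hab
    apply ml_lt ρ hρ hρ' _ _ (by positivity)
    exact mul_lt_mul_of_pos_right (Real.rpow_lt_rpow_of_exponent_lt hlam₁ hab) htp
  have hcont : Continuous f := by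
    apply (ml_continuous ρ hρ).comp
    have : Continuous fun σ : ℝ => lam₁ ^ σ := Real.continuous_const_rpow hl0.ne'
    fun_prop
  have hf1 : mittagLeffler ρ (-(lam₁ * t₀ ^ ρ)) = f 1 := by simp [hf]
  rw [hf1]
  constructor
  · rintro ⟨σ, ⟨hσ, hσd⟩, -⟩
    change f σ = d₁ at hσd
    rw [← hσd]
    exact ⟨hanti hσ.2, hanti hσ.1⟩
  · rintro ⟨h1, h2⟩
    obtain ⟨σ, hσ, hσd⟩ := intermediate_value_Ioo' hσ₀'.le hcont.continuousOn ⟨h1, h2⟩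
    refine ⟨σ, ⟨hσ, hσd⟩, ?_⟩
    rintro τ ⟨_, hτ⟩
    exact hanti.injective (hτ.trans hσd.symm)
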